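/- With the multipath routing state space M, distance d, and best-response operator σ defined from a finite graph G with destination d and a strictly inflationary preorder ⪯ on the set 𝒫 of simple paths to d: (M, d) coincides with the product ultrametric space ∏_{p ∈ 𝒫} (M_p, d_p), where M_p = {∅, {p}} and d_p(∅, {p}) = h(p), i.e. d(m, n) = max_{p ∈ 𝒫} d_p(m ∩ {p}, n ∩ {p}); consequently σ, regarded as an operator on this product with one component per path p ∈ 𝒫, is an asynchronously contracting operator. -/

import Mathlib

/-!
If `q = (i j) p`, then strict inflation gives `p ≺ q`, and a competitor `b = (i k) p'` excludes `q`
from a best response only if `b ≺ q`, so that `p' ≺ b ≺ q`. Hence whether `q` belongs to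
`bestResp pre x` depends only on which of the paths reaching `q` by a chain of strict preferences
belong to `x`. For a preorder on finitely many paths, `≺` is well founded, and so is reachability by
such chains.

Let `σ` be any operator on a product whose component at each `i` depends only on the components
below `i` in a well-founded relation. Well-founded recursion gives its unique fixed point.
Asynchronous convergence follows by well-founded induction on `i`: once the components below `i`
have settled, every late enough activation of `i` reads only settled values, hence computes the
value of the fixed point. If there are finitely many components, they settle by a common time.

For the distances, `p ↦ d_p (m, n)` is `h` cut off to the symmetric difference of `m` and `n`, and
the value `0` taken elsewhere does not affect the supremum.
-/

/-- A simple path in the directed graph with vertex set `V` and arc relation `E`,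
ending at the destination `dest`: a duplicate-free nonempty list of vertices,
consecutive vertices joined by arcs, whose last vertex is `dest`.  The empty path
`ε` at `dest` is represented by the list `[dest]`. -/
structure SimplePath (V : Type*) (E : V → V → Prop) (dest : V) where
  verts : List V
  ends : verts.getLast? = some dest
  nodup : verts.Nodup
  chain : verts.Chain' E

variable {V : Type*} {E : V → V → Prop} {dest : V}

/-- The candidate paths at node `i` given a state `x`: the simple paths of the
form `(i j) p` where `(i, j)` is an arc and `p ∈ x` is a path with source `j`. -/
def cand (x : Set (SimplePath V E dest)) (i : V) : Set (SimplePath V E dest) :=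
  {q | ∃ p ∈ x, ∃ j, p.verts.head? = some j ∧ E i j ∧ q.verts = i :: p.verts}

/-- The minimal (most preferred) elements of a set of paths, with respect to the
strict part `≺` of the preference preorder `⪯`:
`min A = {a ∈ A : no b ∈ A has b ≺ a}`. -/
def minSet {P : Type*} (pre : P → P → Prop) (A : Set P) : Set P :=
  {a | a ∈ A ∧ ∀ b ∈ A, ¬ (pre b a ∧ ¬ pre a b)}

/-- The myopic best-response operator on the multipath routing state space
(states are identified with sets of simple paths to `dest`): the component of
`σ x` at `dest` is `{ε}`, and the component at `i ≠ dest` is the set of minimal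
candidate paths at `i`. -/
def bestResp (pre : SimplePath V E dest → SimplePath V E dest → Prop)
    (x : Set (SimplePath V E dest)) : Set (SimplePath V E dest) :=
  {q | q.verts = [dest] ∨ ∃ i, i ≠ dest ∧ q ∈ minSet pre (cand x i)}

/-- The height of a path: `h p = |{q : p ⪯ q}|`, the number of paths that `p` is
weakly preferred to be below. -/
noncomputable def hval (pre : SimplePath V E dest → SimplePath V E dest → Prop)
    (p : SimplePath V E dest) : ℕ :=
  Nat.card {q : SimplePath V E dest // pre p q}

/-- The ultrametric distance on states: the maximum of `h` over the symmetric
difference `(m \ n) ∪ (n \ m)` (equal to `0` when the symmetric difference is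
empty). -/
noncomputable def pathDist (pre : SimplePath V E dest → SimplePath V E dest → Prop)
    (m n : Set (SimplePath V E dest)) : ℕ :=
  sSup (hval pre '' ((m \ n) ∪ (n \ m)))

/-- The preference preorder `⪯` is strictly inflationary: any simple path `p`
(from `j` to `dest`) is strictly preferred to any simple one-arc extension
`(i j) p` of it. -/
def StrictlyInflationary (pre : SimplePath V E dest → SimplePath V E dest → Prop) : Prop :=
  ∀ (p : SimplePath V E dest) (i j : V), p.verts.head? = some j → E i j →
    ∀ q : SimplePath V E dest, q.verts = i :: p.verts → pre p q ∧ ¬ pre q p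

open Classical in
/-- The component ultrametric for the path `p`: the component space is
`M_p = {∅, {p}}` (recording whether `p` is present in the state), with
`d_p (∅, {p}) = h p`; thus `d_p (m ∩ {p}) (n ∩ {p})` is `0` if `p ∈ m ↔ p ∈ n`
and `h p` otherwise. -/
noncomputable def compDist (pre : SimplePath V E dest → SimplePath V E dest → Prop)
    (p : SimplePath V E dest) (m n : Set (SimplePath V E dest)) : ℕ :=
  if p ∈ m ↔ p ∈ n then 0 else hval pre p

/-- An asynchronous execution schedule `(α, β)` on processors indexed by `ι` is
admissible if every processor activates infinitely often, information does not
propagate backwards in time, and each past data value is used only finitely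
often. -/
def Admissible {ι : Type*} (α : ℕ → Set ι) (β : ℕ → ι → ι → ℕ) : Prop :=
  (∀ (i : ι) (t : ℕ), ∃ t' > t, i ∈ α t') ∧
  (∀ t > 0, ∀ i j : ι, β t i j < t) ∧
  (∀ (i j : ι) (t' : ℕ), ∃ tf : ℕ, ∀ t > tf, β t i j ≠ t')

/-- `x : ℕ → ∀ i, M i` is the asynchronous iteration of `σ` from starting point
`m` under the schedule `(α, β)`: `x 0 = m`; at time `t > 0` an inactive processor
keeps its value, and an active processor `i` recomputes its component of `σ`
applied to the (possibly outdated) values `x (β t i j) j`. -/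
def IsAsyncIter {ι : Type*} {M : ι → Type*} (σ : (∀ i, M i) → (∀ i, M i))
    (m : ∀ i, M i) (α : ℕ → Set ι) (β : ℕ → ι → ι → ℕ)
    (x : ℕ → ∀ i, M i) : Prop :=
  x 0 = m ∧ ∀ t > 0, ∀ i : ι,
    (i ∉ α t → x t i = x (t - 1) i) ∧
    (i ∈ α t → x t i = σ (fun j => x (β t i j) j) i)

/-- `σ` is an asynchronously contracting operator (ACO): it has a unique fixed
point `m*`, and for every admissible schedule and every starting point, the
asynchronous iterates are eventually equal to `m*`. -/
def IsACO {ι : Type*} {M : ι → Type*} (σ : (∀ i, M i) → (∀ i, M i)) : Prop :=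
  ∃ mstar : ∀ i, M i, (σ mstar = mstar ∧ ∀ y, σ y = y → y = mstar) ∧
    ∀ (α : ℕ → Set ι) (β : ℕ → ι → ι → ℕ), Admissible α β →
      ∀ (m : ∀ i, M i) (x : ℕ → ∀ i, M i), IsAsyncIter σ m α β x →
        ∃ T : ℕ, ∀ t > T, x t = mstar

open Filter Function Relation

section DependsOnBelow

variable {ι : Type*} {M : ι → Type*} {r : ι → ι → Prop} {σ : (∀ i, M i) → ∀ i, M i}

theorem exists_isFixedPt_of_dependsOn [Nonempty (∀ i, M i)] (hr : WellFounded r)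
    (hσ : ∀ i, DependsOn (fun x => σ x i) {j | r j i}) : ∃ c, IsFixedPt σ c := by
  classical
  obtain ⟨m⟩ := ‹Nonempty (∀ i, M i)›
  -- The components not below `i` may be filled in from `m`, since `σ` ignores them at `i`.
  let recompute (i : ι) (c : ∀ j, r j i → M j) : M i :=
    σ (fun j => if h : r j i then c j h else m j) i
  refine ⟨hr.fix recompute, funext fun i => ?_⟩
  rw [hr.fix_eq recompute i]
  exact hσ i fun j (hj : r j i) => by simp only [hj, ↓reduceDIte]

theorem isFixedPt_unique_of_dependsOn (hr : WellFounded r)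
    (hσ : ∀ i, DependsOn (fun x => σ x i) {j | r j i}) {c c' : ∀ i, M i}
    (hc : IsFixedPt σ c) (hc' : IsFixedPt σ c') : c = c' := by
  funext i
  induction i using hr.induction with
  | _ i ih => rw [← hc, ← hc']; exact hσ i ih

variable {α : ℕ → Set ι} {β : ℕ → ι → ι → ℕ} {m : ∀ i, M i} {x : ℕ → ∀ i, M i}

theorem Admissible.frequently_mem (h : Admissible α β) (i : ι) : ∃ᶠ t in atTop, i ∈ α t :=
  frequently_atTop'.mpr (h.1 i)

theorem Admissible.tendsto_atTop (h : Admissible α β) (i j : ι) :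
    Tendsto (fun t => β t i j) atTop atTop := by
  rw [← Nat.cofinite_eq_atTop, Tendsto, le_cofinite_iff_eventually_ne, Nat.cofinite_eq_atTop]
  intro s
  obtain ⟨T, hT⟩ := h.2.2 i j s
  exact (eventually_gt_atTop T).mono hT

theorem IsAsyncIter.eventually_apply_eq (hx : IsAsyncIter σ m α β x) {i : ι} {c : M i}
    (hi : ∃ᶠ t in atTop, i ∈ α t)
    (hc : ∀ᶠ t in atTop, σ (fun j => x (β t i j) j) i = c) : ∀ᶠ t in atTop, x t i = c := by
  obtain ⟨T, hT⟩ := eventually_atTop.mp (hc.and (eventually_gt_atTop 0))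
  have eq_of_mem (t : ℕ) (ht : T ≤ t) (hit : i ∈ α t) : x t i = c :=
    ((hx.2 t (hT t ht).2 i).2 hit).trans (hT t ht).1
  obtain ⟨s, hTs, his⟩ := frequently_atTop.mp hi T
  refine eventually_atTop.mpr ⟨s, fun t hst => ?_⟩
  induction t, hst using Nat.le_induction with
  | base => exact eq_of_mem s hTs his
  | succ t hst ih =>
    by_cases hit : i ∈ α (t + 1)
    · exact eq_of_mem (t + 1) (by lia) hit
    · exact ((hx.2 (t + 1) t.succ_pos i).1 hit).trans ih

theorem IsAsyncIter.eventually_apply_eq_of_dependsOn (hx : IsAsyncIter σ m α β x)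
    (hadm : Admissible α β) (hr : WellFounded r) (hfin : ∀ i, {j | r j i}.Finite)
    (hσ : ∀ i, DependsOn (fun x => σ x i) {j | r j i}) {c : ∀ i, M i} (hc : IsFixedPt σ c)
    (i : ι) : ∀ᶠ t in atTop, x t i = c i := by
  induction i using hr.induction with
  | _ i ih =>
    have reads_settled : ∀ᶠ t in atTop, ∀ j ∈ {j | r j i}, x (β t i j) j = c j :=
      (eventually_all_finite (hfin i)).mpr fun j hj =>
        (hadm.tendsto_atTop i j).eventually (ih j hj)
    refine hx.eventually_apply_eq (hadm.frequently_mem i) (reads_settled.mono fun t ht => ?_)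
    exact (hσ i ht).trans (congrFun hc i)

theorem isACO_of_dependsOn [Finite ι] [Nonempty (∀ i, M i)] (hr : WellFounded r)
    (hσ : ∀ i, DependsOn (fun x => σ x i) {j | r j i}) : IsACO σ := by
  obtain ⟨c, hc⟩ := exists_isFixedPt_of_dependsOn hr hσ
  refine ⟨c, ⟨hc, fun _ hy => isFixedPt_unique_of_dependsOn hr hσ hy hc⟩, fun α β hadm m x hx => ?_⟩
  have settled : ∀ᶠ t in atTop, ∀ i, x t i = c i :=
    eventually_all.mpr fun i =>
      hx.eventually_apply_eq_of_dependsOn hadm hr (fun _ => Set.toFinite _) hσ hc i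
  obtain ⟨T, hT⟩ := eventually_atTop.mp settled
  exact ⟨T, fun t ht => funext (hT t ht.le)⟩

end DependsOnBelow

/-- The strict part `≺` of a preference relation `⪯`: `p ≺ q` if `p ⪯ q` but not `q ⪯ p`. -/
def StrictPart {P : Type*} (pre : P → P → Prop) (p q : P) : Prop :=
  pre p q ∧ ¬ pre q p

theorem wellFounded_strictPart {P : Type*} [Finite P] {pre : P → P → Prop}
    (htrans : ∀ p q r, pre p q → pre q r → pre p r) : WellFounded (StrictPart pre) := by
  have : IsTrans P (StrictPart pre) :=
    ⟨fun p q r hpq hqr =>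
      ⟨htrans p q r hpq.1 hqr.1, fun hrp => hpq.2 (htrans q r p hqr.1 hrp)⟩⟩
  have : Std.Irrefl (StrictPart pre) := ⟨fun _ h => h.2 h.1⟩
  exact Finite.wellFounded_of_trans_of_irrefl _

theorem SimplePath.verts_injective : Injective (SimplePath.verts : SimplePath V E dest → List V)
  | ⟨_, _, _, _⟩, ⟨_, _, _, _⟩, rfl => rfl

instance SimplePath.instFinite [Finite V] : Finite (SimplePath V E dest) := by
  classical
  have := Fintype.ofFinite V
  exact Finite.of_injective (fun p => (⟨p.verts, p.nodup⟩ : {l : List V // l.Nodup}))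
    fun _ _ h => verts_injective (congrArg Subtype.val h)

section BestResponse

variable {pre : SimplePath V E dest → SimplePath V E dest → Prop}
  {x y : Set (SimplePath V E dest)} {q : SimplePath V E dest}

theorem StrictlyInflationary.mem_cand_congr (hinfl : StrictlyInflationary pre) (i : V)
    (hxy : ∀ p, StrictPart pre p q → (p ∈ x ↔ p ∈ y)) : q ∈ cand x i ↔ q ∈ cand y i :=
  exists_congr fun p => and_congr_left fun ⟨j, hj, hij, hq⟩ => hxy p (hinfl p i j hj hij q hq)

theorem StrictlyInflationary.mem_minSet_cand_congr (hinfl : StrictlyInflationary pre) (i : V)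
    (hxy : ∀ p, TransGen (StrictPart pre) p q → (p ∈ x ↔ p ∈ y)) :
    q ∈ minSet pre (cand x i) ↔ q ∈ minSet pre (cand y i) := by
  have competitor_congr (b : SimplePath V E dest) (hbq : StrictPart pre b q) :
      b ∈ cand x i ↔ b ∈ cand y i :=
    hinfl.mem_cand_congr i fun p hpb => hxy p (.tail (.single hpb) hbq)
  refine and_congr (hinfl.mem_cand_congr i fun p hpq => hxy p (.single hpq))
    (forall_congr' fun b => ?_)
  rw [imp_not_comm, imp_not_comm (a := b ∈ cand y i)]
  exact imp_congr_right fun hbq => not_congr (competitor_congr b hbq)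

theorem StrictlyInflationary.dependsOn_bestResp (hinfl : StrictlyInflationary pre)
    (q : SimplePath V E dest) :
    DependsOn (fun x : SimplePath V E dest → Prop => bestResp pre x q)
      {p | TransGen (StrictPart pre) p q} := fun _ _ hxy =>
  propext <| or_congr_right <| exists_congr fun i => and_congr_right fun _ =>
    hinfl.mem_minSet_cand_congr i fun p hp => iff_of_eq (hxy p hp)

end BestResponse

theorem sSup_range_indicator {ι R : Type*} [ConditionallyCompleteLinearOrderBot R] [AddMonoid R]
    [CanonicallyOrderedAdd R] (s : Set ι) (f : ι → R) :
    sSup (Set.range (s.indicator f)) = sSup (f '' s) := by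
  rcases s.eq_empty_or_nonempty with rfl | ⟨a, ha⟩
  · cases isEmpty_or_nonempty ι <;> simp [Set.range_eq_empty]
  · refine csSup_eq_csSup_of_forall_exists_le ?_ ?_
    · rintro _ ⟨i, rfl⟩
      by_cases hi : i ∈ s
      · exact ⟨f i, ⟨i, hi, rfl⟩, (Set.indicator_of_mem hi f).le⟩
      · exact ⟨f a, ⟨a, ha, rfl⟩, (Set.indicator_of_notMem hi f).trans_le zero_le⟩
    · rintro _ ⟨i, hi, rfl⟩
      exact ⟨_, ⟨i, rfl⟩, (Set.indicator_of_mem hi f).ge⟩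

theorem compDist_eq_indicator (pre : SimplePath V E dest → SimplePath V E dest → Prop)
    (p : SimplePath V E dest) (m n : Set (SimplePath V E dest)) :
    compDist pre p m n = (m \ n ∪ n \ m).indicator (hval pre) p := by
  classical
  have mem_iff : p ∈ m \ n ∪ n \ m ↔ ¬ (p ∈ m ↔ p ∈ n) := by
    simp only [Set.mem_union, Set.mem_sdiff]
    tauto
  simp only [compDist, Set.indicator_apply, mem_iff, ite_not]

theorem pathDist_eq_sSup_range_compDist
    (pre : SimplePath V E dest → SimplePath V E dest → Prop) (m n : Set (SimplePath V E dest)) :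
    pathDist pre m n = sSup (Set.range fun p => compDist pre p m n) := by
  simp only [compDist_eq_indicator]
  exact (sSup_range_indicator _ _).symm

theorem bestResp_product_ACO_general [Finite (SimplePath V E dest)]
    (pre : SimplePath V E dest → SimplePath V E dest → Prop)
    (hwf : WellFounded (StrictPart pre)) (hinfl : StrictlyInflationary pre) :
    (∀ m n : Set (SimplePath V E dest),
      pathDist pre m n = sSup (Set.range fun p => compDist pre p m n)) ∧
    IsACO (ι := SimplePath V E dest) (M := fun _ => Prop) (bestResp pre) :=
  ⟨pathDist_eq_sSup_range_compDist pre,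
    isACO_of_dependsOn (M := fun _ => Prop) hwf.transGen hinfl.dependsOn_bestResp⟩

/-- for a finite graph with destination `dest` and a strictly
inflationary preference preorder on the simple paths to `dest`, the routing
ultrametric `d` coincides with the product over all paths `p` of the component
ultrametrics `d_p` (`d m n = max_p d_p (m ∩ {p}) (n ∩ {p})`), and consequently
the best-response operator, regarded as an operator on the product with one
component (the presence or absence of `p`) per path `p`, is an asynchronously
contracting operator. -/
theorem bestResp_product_ACO {V : Type*} [Fintype V]
    {E : V → V → Prop} {dest : V}
    (pre : SimplePath V E dest → SimplePath V E dest → Prop)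
    (hrefl : ∀ p, pre p p)
    (htrans : ∀ p q r, pre p q → pre q r → pre p r)
    (hinfl : StrictlyInflationary pre) :
    (∀ m n : Set (SimplePath V E dest),
      pathDist pre m n = sSup (Set.range fun p => compDist pre p m n)) ∧
    IsACO (ι := SimplePath V E dest) (M := fun _ => Prop) (bestResp pre) :=
  bestResp_product_ACO_general pre (wellFounded_strictPart htrans) hinfl
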